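/- arXiv:2207.03235 — 2 statements merged into one kernel-verified Lean document; each statement's English description precedes it below -/
import Mathlib

section
/- Let A ∈ ℝ^{n×n}, B ∈ ℝ^{n×m} with the pair {A,B} controllable (i.e., the block matrix [B, AB, …, A^{n−1}B] has rank n), and let ñ be the minimal natural number such that [B, AB, …, A^{ñ−1}B] has rank n. Suppose Y₀ ∈ ℝ^{m×n} and G₀ ∈ ℝ^{n×n} satisfy A G₀ − G₀ A + B Y₀ = A and G₀ B = 0. Then: (i) the matrix G₀ − I_n is invertible; (ii) for every μ ∈ [−1, 1/ñ] the matrix G_d = I_n + μ G₀ is anti-Hurwitz, i.e., every eigenvalue of G_d (regarded as a complex matrix) has strictly positive real part; (iii) the matrix A₀ = A + B Y₀ (G₀ − I_n)^{−1} satisfies A₀ G_d = (G_d + μ I_n) A₀ and G_d B = B for every μ ∈ [−1, 1/ñ]. -/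
open Matrix

/-- The controllability matrix [B, AB, …, A^{k−1}B] (with columns indexed by `Fin k × Fin m`). -/
def ctrbM {n m : ℕ} (A : Matrix (Fin n) (Fin n) ℝ) (B : Matrix (Fin n) (Fin m) ℝ) (k : ℕ) :
    Matrix (Fin n) (Fin k × Fin m) ℝ :=
  Matrix.of fun i p => (A ^ (p.1 : ℕ) * B) i p.2

/-- A real matrix is anti-Hurwitz if every eigenvalue of its complexification has
strictly positive real part. -/
def AntiHurwitz {n : ℕ} (M : Matrix (Fin n) (Fin n) ℝ) : Prop :=
  ∀ z ∈ spectrum ℂ (M.map (Complex.ofReal)), 0 < z.re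

/-- Rising product `(G + (k-1)) ⋯ (G + 1) G`. -/
def risP {K : Type*} [CommRing K] {n : ℕ} (G : Matrix (Fin n) (Fin n) K) :
    ℕ → Matrix (Fin n) (Fin n) K
  | 0 => 1
  | k + 1 => (G + (k : Matrix (Fin n) (Fin n) K)) * risP G k

lemma risP_map {n : ℕ} (G : Matrix (Fin n) (Fin n) ℝ) (k : ℕ) :
    risP ((Complex.ofRealHom.mapMatrix) G) k = Complex.ofRealHom.mapMatrix (risP G k) := by
  induction k with
  | zero => rw [risP, risP, map_one]
  | succ k ih => rw [risP, risP, map_mul, map_add, map_natCast, ih]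

lemma risP_eig {K : Type*} [Field K] {n : ℕ} (G : Matrix (Fin n) (Fin n) K) (v : Fin n → K)
    (hv : v ≠ 0) (z : K) (h : G *ᵥ v = z • v) (k : ℕ) (hk : risP G k = 0) :
    ∃ j < k, z = -(j : K) := by
  have key : ∀ k, risP G k *ᵥ v = (∏ j ∈ Finset.range k, (z + j)) • v := by
    intro k
    induction k with
    | zero => simp [risP]
    | succ k ih =>
      have hn : ((k : Matrix (Fin n) (Fin n) K)) *ᵥ v = (k : K) • v := by
        rw [← Matrix.diagonal_natCast' k]
        ext i
        simp [Matrix.mulVec_diagonal]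
      rw [risP, ← Matrix.mulVec_mulVec, ih, Matrix.mulVec_smul, Matrix.add_mulVec, h, hn,
        ← add_smul, smul_smul, Finset.prod_range_succ]
  have h0 := key k
  rw [hk, Matrix.zero_mulVec] at h0
  have h1 := (smul_eq_zero.mp h0.symm).resolve_right hv
  obtain ⟨j, hj, hj0⟩ := Finset.prod_eq_zero_iff.mp h1
  exact ⟨j, Finset.mem_range.mp hj, eq_neg_of_add_eq_zero_left hj0⟩

lemma risP_zero {n m : ℕ} (A : Matrix (Fin n) (Fin n) ℝ) (B : Matrix (Fin n) (Fin m) ℝ)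
    (Y : Matrix (Fin m) (Fin n) ℝ) (G : Matrix (Fin n) (Fin n) ℝ)
    (hYG : A * G - G * A + B * Y = A) (hGB : G * B = 0) (k : ℕ)
    (hr : (ctrbM A B k).rank = n) : risP G k = 0 := by
  have h1 : G * (G * A) = G * A * (G - 1) := by
    have e : G * A = A * (G - 1) + B * Y := by
      rw [mul_sub, mul_one]; nth_rewrite 3 [← hYG]; abel
    nth_rewrite 1 [e]
    rw [mul_add, ← Matrix.mul_assoc G B Y, hGB, Matrix.zero_mul, add_zero, mul_assoc]
  have h2 : ∀ k, risP G (k + 1) * A = G * A * risP G k := by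
    intro k
    induction k with
    | zero => simp [risP]
    | succ k ih =>
      have e : (G + ((k + 1 : ℕ) : Matrix (Fin n) (Fin n) ℝ)) * (G * A)
          = (G * A) * (G + (k : Matrix (Fin n) (Fin n) ℝ)) := by
        rw [add_mul, h1, mul_add, mul_sub, mul_one, Nat.cast_succ, add_mul, one_mul,
          (Nat.cast_commute k (G * A)).eq]
        abel
      calc risP G (k + 1 + 1) * A
          = (G + ((k + 1 : ℕ) : Matrix (Fin n) (Fin n) ℝ)) * (risP G (k + 1) * A) := by
            rw [← mul_assoc]; rfl
        _ = (G * A) * (G + (k : Matrix (Fin n) (Fin n) ℝ)) * risP G k := by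
            rw [ih, ← mul_assoc, e]
        _ = G * A * risP G (k + 1) := by rw [mul_assoc (G * A)]; rfl
  have h3 : ∀ k, risP G (k + 1) * B = 0 := by
    intro k
    induction k with
    | zero => simpa [risP] using hGB
    | succ k ih => rw [risP, Matrix.mul_assoc, ih, Matrix.mul_zero]
  have h4 : ∀ j k, j < k → risP G k * (A ^ j * B) = 0 := by
    intro j
    induction j with
    | zero =>
      intro k hk
      obtain ⟨k, rfl⟩ := Nat.exists_eq_succ_of_ne_zero hk.ne'
      simpa using h3 k
    | succ j ih =>
      intro k hk
      obtain ⟨k, rfl⟩ := Nat.exists_eq_succ_of_ne_zero (by omega : k ≠ 0)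
      rw [pow_succ', Matrix.mul_assoc, ← Matrix.mul_assoc, h2, Matrix.mul_assoc,
        ih k (by omega), Matrix.mul_zero]
  have h5 : risP G k * ctrbM A B k = 0 := by
    ext i p
    have := congrFun (congrFun (h4 p.1 k p.1.2) i) p.2
    simpa [Matrix.mul_apply, ctrbM] using this
  have htop : LinearMap.range (ctrbM A B k).mulVecLin = ⊤ := by
    apply Submodule.eq_top_of_finrank_eq
    rw [Module.finrank_fin_fun]
    exact hr
  apply Matrix.toLin'.injective
  ext1 i
  rw [map_zero]
  ext1
  obtain ⟨w, hw⟩ := LinearMap.range_eq_top.mp htop (Pi.single i 1)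
  rw [LinearMap.comp_apply, LinearMap.single_apply, ← hw, Matrix.mulVecLin_apply,
    Matrix.toLin'_apply, Matrix.mulVec_mulVec, h5]
  simp

/-- Properties of any solution (Y₀, G₀) of A G₀ − G₀ A + B Y₀ = A, G₀ B = 0 for a
controllable pair {A,B}. -/
theorem Y0_G0_properties
    {n m : ℕ}
    (A : Matrix (Fin n) (Fin n) ℝ) (B : Matrix (Fin n) (Fin m) ℝ)
    (hctrb : (ctrbM A B n).rank = n)
    (ntilde : ℕ) (hntilde : (ctrbM A B ntilde).rank = n) (hntildemin : ∀ k < ntilde, (ctrbM A B k).rank ≠ n)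
    (Y₀ : Matrix (Fin m) (Fin n) ℝ) (G₀ : Matrix (Fin n) (Fin n) ℝ)
    (hYG : A * G₀ - G₀ * A + B * Y₀ = A) (hG₀B : G₀ * B = 0) :
    IsUnit (G₀ - 1) ∧
    ∀ μ : ℝ, μ ∈ Set.Icc (-1 : ℝ) (1 / (ntilde : ℝ)) →
      AntiHurwitz (1 + μ • G₀) ∧
      (A + B * Y₀ * (G₀ - 1)⁻¹) * (1 + μ • G₀) =
        ((1 + μ • G₀) + μ • 1) * (A + B * Y₀ * (G₀ - 1)⁻¹) ∧
      (1 + μ • G₀) * B = B := by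
  have hP := risP_zero A B Y₀ G₀ hYG hG₀B ntilde hntilde
  have hU : IsUnit (G₀ - 1) := by
    rw [Matrix.isUnit_iff_isUnit_det, isUnit_iff_ne_zero]
    intro hd
    obtain ⟨v, hv, hv0⟩ := Matrix.exists_mulVec_eq_zero_iff.mpr hd
    rw [Matrix.sub_mulVec, Matrix.one_mulVec, sub_eq_zero] at hv0
    obtain ⟨j, -, hj⟩ := risP_eig G₀ v hv 1 (by rw [hv0, one_smul]) ntilde hP
    have : (0 : ℝ) ≤ j := Nat.cast_nonneg j
    linarith
  refine ⟨hU, fun μ hμ => ⟨?_, ?_, ?_⟩⟩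
  · intro z hz
    have hPC : risP (Complex.ofRealHom.mapMatrix G₀) ntilde = 0 := by
      rw [risP_map, hP, map_zero]
    have hmap : (1 + μ • G₀).map Complex.ofReal
        = 1 + (μ : ℂ) • Complex.ofRealHom.mapMatrix G₀ := by
      ext i j
      by_cases hij : i = j <;> simp [Matrix.one_apply, hij]
    rw [hmap, spectrum.mem_iff, Matrix.isUnit_iff_isUnit_det, isUnit_iff_ne_zero, not_not] at hz
    obtain ⟨v, hv, hv0⟩ := Matrix.exists_mulVec_eq_zero_iff.mpr hz
    rw [Matrix.sub_mulVec, Algebra.algebraMap_eq_smul_one, Matrix.smul_mulVec, Matrix.one_mulVec,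
      Matrix.add_mulVec, Matrix.one_mulVec, Matrix.smul_mulVec, sub_eq_zero] at hv0
    have hv1 : (μ : ℂ) • (Complex.ofRealHom.mapMatrix G₀ *ᵥ v) = (z - 1) • v := by
      rw [sub_smul, hv0, one_smul]; abel
    by_cases h0 : μ = 0
    · rw [h0, Complex.ofReal_zero, zero_smul] at hv1
      have := (smul_eq_zero.mp hv1.symm).resolve_right hv
      rw [sub_eq_zero.mp this]; simp
    · have h0' : (μ : ℂ) ≠ 0 := Complex.ofReal_ne_zero.mpr h0
      obtain ⟨j, hj, hzj⟩ := risP_eig (Complex.ofRealHom.mapMatrix G₀) v hv ((μ : ℂ)⁻¹ * (z - 1))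
        (by rw [mul_smul, ← hv1, smul_smul, inv_mul_cancel₀ h0', one_smul]) ntilde hPC
      have hz1 : z = ((1 - μ * j : ℝ) : ℂ) := by
        field_simp at hzj
        push_cast
        linear_combination hzj
      rw [hz1, Complex.ofReal_re]
      have hjn : (j : ℝ) < ntilde := by exact_mod_cast hj
      have hj0 : (0 : ℝ) ≤ j := Nat.cast_nonneg j
      have hn0 : (0 : ℝ) < ntilde := lt_of_le_of_lt hj0 hjn
      have h2 : μ * ntilde ≤ 1 := (le_div_iff₀ hn0).mp hμ.2
      rcases le_or_gt μ 0 with h | h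
      · nlinarith
      · nlinarith
  · have hd : IsUnit (G₀ - 1).det := (Matrix.isUnit_iff_isUnit_det _).mp hU
    set A₀ := A + B * Y₀ * (G₀ - 1)⁻¹ with hA₀
    have e1 : A₀ * (G₀ - 1) = G₀ * A := by
      rw [hA₀, add_mul, Matrix.mul_assoc (B * Y₀), Matrix.nonsing_inv_mul _ hd, Matrix.mul_one,
        mul_sub, mul_one]
      nth_rewrite 2 [← hYG]
      abel
    have e2 : G₀ * A₀ = G₀ * A := by
      rw [hA₀, mul_add, Matrix.mul_assoc B, ← Matrix.mul_assoc G₀ B, hG₀B, Matrix.zero_mul,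
        add_zero]
    have e3 : A₀ * G₀ = G₀ * A₀ + A₀ := by
      rw [e2, ← e1, mul_sub, mul_one]; abel
    rw [mul_add, mul_one, Matrix.mul_smul, e3, add_mul, add_mul, one_mul, Matrix.smul_mul,
      Matrix.smul_mul, one_mul, smul_add]
    abel
  · rw [Matrix.add_mul, Matrix.one_mul, Matrix.smul_mul, hG₀B, smul_zero, add_zero]
end

section
/- Let A₀ ∈ ℝ^{n×n}, B ∈ ℝ^{n×m} with the pair {A₀,B} controllable (rank [B, A₀B, …, A₀^{n−1}B] = n), let μ ∈ ℝ and let G_d ∈ ℝ^{n×n} be anti-Hurwitz (all eigenvalues of its complexification have strictly positive real part) with A₀ G_d = (G_d + μ I_n) A₀ and G_d B = B, where μ ∈ [−1, 1/ñ] and ñ is the minimal natural number such that rank [B, A₀B, …, A₀^{ñ−1}B] = n. Then for every ρ > 0 there exist a symmetric positive definite matrix X ∈ ℝ^{n×n} and a matrix Y ∈ ℝ^{m×n} such that A₀ X + X A₀ᵀ + B Y + Yᵀ Bᵀ + ρ (G_d X + X G_dᵀ) = 0 and G_d X + X G_dᵀ is positive definite. -/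
open Matrix

theorem aux_ctrb_inj {n m : ℕ} (A : Matrix (Fin n) (Fin n) ℝ) (B : Matrix (Fin n) (Fin m) ℝ) (k : ℕ)
    (h : (ctrbM A B k).rank = n) (x : Fin n → ℝ)
    (hx : ∀ i < k, x ᵥ* (A ^ i * B) = 0) : x = 0 := by
  have hli : LinearIndependent ℝ (ctrbM A B k).row := by
    rw [linearIndependent_iff_card_eq_finrank_span, Set.finrank, ← Matrix.rank_eq_finrank_span_row, h]
    simp
  have hinj := Matrix.vecMul_injective_iff.mpr hli
  apply hinj
  simp only [Matrix.zero_vecMul]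
  funext p
  have := congrFun (hx p.1 p.1.2) p.2
  simpa [ctrbM, Matrix.vecMul, dotProduct] using this

theorem aux_ctrb_mat {n m q : ℕ} (A : Matrix (Fin n) (Fin n) ℝ) (B : Matrix (Fin n) (Fin m) ℝ) (k : ℕ)
    (h : (ctrbM A B k).rank = n) (M : Matrix (Fin q) (Fin n) ℝ)
    (hx : ∀ i < k, M * (A ^ i * B) = 0) : M = 0 := by
  funext r
  apply aux_ctrb_inj A B k h
  intro i hi
  funext c
  have := congrFun (congrFun (hx i hi) r) c
  rw [Matrix.mul_apply] at this
  exact this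

theorem aux_cauchy (t : ℕ → ℝ) (s : Finset ℕ) : (∀ i ∈ s, 0 < t i) → Set.InjOn t s → ∀ a : ℕ → ℝ,
    0 ≤ ∑ i ∈ s, ∑ j ∈ s, a i * a j / (t i + t j) ∧
    (∑ i ∈ s, ∑ j ∈ s, a i * a j / (t i + t j) = 0 → ∀ i ∈ s, a i = 0) := by
  induction s using Finset.induction_on with
  | empty => intro _ _ a; simp
  | insert k s hk ih =>
    intro hpos hinj a
    have hpk := hpos k (by simp)
    have hps : ∀ i ∈ s, 0 < t i := fun i hi => hpos i (by simp [hi])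
    have hne : ∀ i ∈ s, t i - t k ≠ 0 := by
      intro i hi h
      have := hinj (by simp [hi] : i ∈ ((insert k s : Finset ℕ) : Set ℕ)) (by simp) (sub_eq_zero.mp h)
      exact hk (this ▸ hi)
    have hinj' : Set.InjOn t s := hinj.mono (by simp)
    set b : ℕ → ℝ := fun i => a i * (t i - t k) / (t i + t k) with hb
    obtain ⟨h1, h2⟩ := ih hps hinj' b
    have key : ∑ i ∈ insert k s, ∑ j ∈ insert k s, a i * a j / (t i + t j)
        = 2 * t k * (∑ i ∈ insert k s, a i / (t i + t k)) ^ 2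
          + ∑ i ∈ s, ∑ j ∈ s, b i * b j / (t i + t j) := by
      have hbk : b k = 0 := by simp [hb]
      have e1 : ∑ i ∈ s, ∑ j ∈ s, b i * b j / (t i + t j)
          = ∑ i ∈ insert k s, ∑ j ∈ insert k s, b i * b j / (t i + t j) := by
        simp [Finset.sum_insert hk, hbk]
      rw [e1, sq, Finset.sum_mul_sum, Finset.mul_sum, ← Finset.sum_add_distrib]
      refine Finset.sum_congr rfl fun i hi => ?_
      rw [Finset.mul_sum, ← Finset.sum_add_distrib]
      refine Finset.sum_congr rfl fun j hj => ?_
      have := hpos i hi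
      have := hpos j hj
      simp only [hb]
      field_simp
      ring
    rw [key]
    have h3 : 0 ≤ 2 * t k * (∑ i ∈ insert k s, a i / (t i + t k)) ^ 2 := by positivity
    refine ⟨by linarith, fun h0 => ?_⟩
    have hb0 := h2 (by linarith)
    have has : ∀ i ∈ s, a i = 0 := by
      intro i hi
      have h4 := hb0 i hi
      have := hps i hi
      have h5 : t i + t k ≠ 0 := by positivity
      simpa [hb, hne i hi, h5] using h4
    intro i hi
    rcases Finset.mem_insert.mp hi with rfl | hi
    · have h6 : 2 * t i * (∑ j ∈ insert i s, a j / (t j + t i)) ^ 2 = 0 := by linarith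
      rw [Finset.sum_insert hk, Finset.sum_eq_zero (s := s) (fun j hj => by simp [has j hj])] at h6
      have h5 : t i + t i ≠ 0 := by positivity
      simpa [hpk.ne', h5] using h6
    · exact has i hi

theorem aux_quad {n m : ℕ} (V W : Matrix (Fin n) (Fin m) ℝ) (x : Fin n → ℝ) :
    x ⬝ᵥ ((V * Wᵀ) *ᵥ x) = ∑ r, (x ᵥ* V) r * (x ᵥ* W) r := by
  rw [← Matrix.mulVec_mulVec, Matrix.dotProduct_mulVec, Matrix.mulVec_transpose]
  rfl

theorem aux_posdef_cauchy {n m : ℕ} (V : ℕ → Matrix (Fin n) (Fin m) ℝ) (N : ℕ) (t : ℕ → ℝ)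
    (ht : ∀ i ∈ Finset.range N, 0 < t i) (hinj : Set.InjOn t (Finset.range N))
    (hV : ∀ x : Fin n → ℝ, (∀ i < N, x ᵥ* V i = 0) → x = 0) :
    (∑ i ∈ Finset.range N, ∑ j ∈ Finset.range N, (1 / (t i + t j)) • (V i * (V j)ᵀ)).PosDef := by
  refine Matrix.PosDef.of_dotProduct_mulVec_pos ?_ ?_
  · rw [Matrix.IsHermitian, Matrix.conjTranspose_eq_transpose_of_trivial]
    simp only [Matrix.transpose_sum]
    rw [Finset.sum_comm]
    refine Finset.sum_congr rfl fun i _ => ?_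
    refine Finset.sum_congr rfl fun j _ => ?_
    simp [Matrix.transpose_mul, add_comm]
  · intro x hx
    have e : star x ⬝ᵥ ((∑ i ∈ Finset.range N, ∑ j ∈ Finset.range N,
        (1 / (t i + t j)) • (V i * (V j)ᵀ)) *ᵥ x)
        = ∑ r, ∑ i ∈ Finset.range N, ∑ j ∈ Finset.range N,
          (x ᵥ* V i) r * (x ᵥ* V j) r / (t i + t j) := by
      simp only [star_trivial, Matrix.sum_mulVec, dotProduct_sum, Matrix.smul_mulVec, dotProduct_smul, aux_quad]
      symm
      rw [Finset.sum_comm]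
      refine Finset.sum_congr rfl fun i _ => ?_
      rw [Finset.sum_comm]
      refine Finset.sum_congr rfl fun j _ => ?_
      rw [smul_eq_mul, Finset.mul_sum]
      refine Finset.sum_congr rfl fun r _ => ?_
      ring
    rw [e]
    have hnn : ∀ r ∈ Finset.univ, 0 ≤ ∑ i ∈ Finset.range N, ∑ j ∈ Finset.range N,
          (x ᵥ* V i) r * (x ᵥ* V j) r / (t i + t j) :=
      fun r _ => (aux_cauchy t _ ht hinj fun i => (x ᵥ* V i) r).1
    refine lt_of_le_of_ne (Finset.sum_nonneg hnn) fun h0 => hx (hV x fun i hi => ?_)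
    funext r
    exact (aux_cauchy t _ ht hinj fun i => (x ᵥ* V i) r).2
      ((Finset.sum_eq_zero_iff_of_nonneg hnn).mp h0.symm r (Finset.mem_univ _)) i (by simpa using hi)

theorem aux_shift {M : Type*} [AddCommGroup M] (f : ℕ → M) (N : ℕ) (h0 : f 0 = 0) (hN : f N = 0) :
    ∑ i ∈ Finset.range N, f (i + 1) = ∑ i ∈ Finset.range N, f i := by
  have h1 := Finset.sum_range_succ' f N
  have h2 := Finset.sum_range_succ f N
  rw [h0, add_zero] at h1
  rw [hN, add_zero] at h2
  rw [← h1, h2]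

theorem aux_core {n m : ℕ} (A G : Matrix (Fin n) (Fin n) ℝ) (B : Matrix (Fin n) (Fin m) ℝ)
    (V : ℕ → Matrix (Fin n) (Fin m) ℝ) (N : ℕ) (μ ρ : ℝ) (hρ : 0 < ρ) (hμ0 : μ ≠ 0) (hμ2 : 0 < 2 + μ)
    (hA : ∀ i : ℕ, A * V i = (-(ρ * μ * (i + 1))) • V (i + 1))
    (hG : ∀ i : ℕ, G * V i = (1 - i * μ) • V i + (μ * (i + 1)) • V (i + 1))
    (hN : V N = 0) (hB : ∑ i ∈ Finset.range N, V i = B)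
    (hV : ∀ x : Fin n → ℝ, (∀ i < N, x ᵥ* V i = 0) → x = 0)
    (h1 : ∀ i < N, 0 < 1 - i * μ) (h2 : ∀ i < N, 0 < 1 + μ / 2 - i * μ) :
    ∃ (X : Matrix (Fin n) (Fin n) ℝ) (Y : Matrix (Fin m) (Fin n) ℝ),
        X.PosDef ∧
        A * X + X * Aᵀ + B * Y + Yᵀ * Bᵀ + ρ • (G * X + X * Gᵀ) = 0 ∧
        (G * X + X * Gᵀ).PosDef := by
  set s : ℕ → ℝ := fun i => ρ * (1 - i * μ) with hs
  set t : ℕ → ℝ := fun i => 1 + μ / 2 - i * μ with ht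
  set X := ∑ i ∈ Finset.range N, ∑ j ∈ Finset.range N, (1 / (s i + s j)) • (V i * (V j)ᵀ) with hX
  have hspos : ∀ i ∈ Finset.range N, 0 < s i := fun i hi => mul_pos hρ (h1 i (by simpa using hi))
  have htpos : ∀ i ∈ Finset.range N, 0 < t i := fun i hi => h2 i (by simpa using hi)
  have hXP : X.PosDef := by
    apply aux_posdef_cauchy V N s hspos _ hV
    intro i _ j _ hij
    simp only [hs] at hij
    have h3 := mul_left_cancel₀ hρ.ne' hij
    have h4 : (i : ℝ) * μ = j * μ := by linarith
    exact_mod_cast mul_right_cancel₀ hμ0 h4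
  have hTP : (∑ i ∈ Finset.range N, ∑ j ∈ Finset.range N, (1 / (t i + t j)) • (V i * (V j)ᵀ)).PosDef := by
    apply aux_posdef_cauchy V N t htpos _ hV
    intro i _ j _ hij
    simp only [ht] at hij
    have h4 : (i : ℝ) * μ = j * μ := by linarith
    exact_mod_cast mul_right_cancel₀ hμ0 h4
  have hXT : Xᵀ = X := by
    have := hXP.isHermitian
    rwa [Matrix.IsHermitian, Matrix.conjTranspose_eq_transpose_of_trivial] at this
  -- general symmetrization
  have symm : ∀ (M : Matrix (Fin n) (Fin n) ℝ) (c : ℕ → ℕ → ℝ),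
      M * X = ∑ i ∈ Finset.range N, ∑ j ∈ Finset.range N, c i j • (V i * (V j)ᵀ) →
      M * X + X * Mᵀ = ∑ i ∈ Finset.range N, ∑ j ∈ Finset.range N, (c i j + c j i) • (V i * (V j)ᵀ) := by
    intro M c h
    have h' : X * Mᵀ = (M * X)ᵀ := by rw [Matrix.transpose_mul, hXT]
    rw [h', h]
    simp only [Matrix.transpose_sum, add_smul, Finset.sum_add_distrib]
    congr 1
    rw [Finset.sum_comm]
    refine Finset.sum_congr rfl fun i _ => Finset.sum_congr rfl fun j _ => ?_
    simp [Matrix.transpose_mul]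
  have hSX := symm (A + ρ • G) (fun i j => s i / (s i + s j)) (by
    rw [hX]
    simp only [Finset.mul_sum]
    refine Finset.sum_congr rfl fun i _ => Finset.sum_congr rfl fun j _ => ?_
    have e : (A + ρ • G) * V i = s i • V i := by
      rw [Matrix.add_mul, Matrix.smul_mul, hA, hG]
      simp only [hs]
      module
    rw [Matrix.mul_smul, ← Matrix.mul_assoc, e, Matrix.smul_mul, smul_smul]
    congr 1
    ring)
  have hSX' : (A + ρ • G) * X + X * (A + ρ • G)ᵀ = B * Bᵀ := by
    rw [hSX, ← hB, Matrix.transpose_sum, Matrix.sum_mul]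
    simp only [Matrix.mul_sum]
    refine Finset.sum_congr rfl fun i hi => Finset.sum_congr rfl fun j hj => ?_
    have := hspos i hi
    have := hspos j hj
    have e : s i / (s i + s j) + s j / (s j + s i) = 1 := by
      rw [add_comm (s j), ← add_div, div_self (by positivity)]
    rw [e, one_smul]
  have hGX := symm G (fun i j => (1 - i * μ) / (s i + s j) + μ * i / (ρ * (t i + t j))) (by
    have hst : ∀ i j : ℕ, s i + s j = ρ * (t (i + 1) + t j) := by
      intro i j
      simp only [hs, ht]
      push_cast
      ring
    rw [hX]
    simp only [Finset.mul_sum]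
    rw [Finset.sum_comm]
    conv_rhs => rw [Finset.sum_comm]
    refine Finset.sum_congr rfl fun j _ => ?_
    simp only [add_smul, Finset.sum_add_distrib]
    rw [← aux_shift (fun i : ℕ => (μ * i / (ρ * (t i + t j))) • (V i * (V j)ᵀ)) N (by simp) (by simp [hN]),
      ← Finset.sum_add_distrib]
    refine Finset.sum_congr rfl fun i _ => ?_
    rw [Matrix.mul_smul, ← Matrix.mul_assoc, hG, Matrix.add_mul, Matrix.smul_mul, Matrix.smul_mul, ← hst,
      smul_add, smul_smul, smul_smul]
    push_cast
    congr 2 <;> ring)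
  have hGX' : G * X + X * Gᵀ = ((2 + μ) / ρ) • ∑ i ∈ Finset.range N, ∑ j ∈ Finset.range N,
      (1 / (t i + t j)) • (V i * (V j)ᵀ) := by
    rw [hGX]
    simp only [Finset.smul_sum]
    refine Finset.sum_congr rfl fun i hi => Finset.sum_congr rfl fun j hj => ?_
    rw [smul_smul]
    congr 1
    have e1 : 0 < (1 - i * μ) + (1 - j * μ) := add_pos (h1 i (by simpa using hi)) (h1 j (by simpa using hj))
    have e2 := add_pos (htpos i hi) (htpos j hj)
    have e3 : s i + s j = ρ * ((1 - i * μ) + (1 - j * μ)) := by simp only [hs]; ring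
    have e4 : t i + t j = ((1 - i * μ) + (1 - j * μ)) + μ := by simp only [ht]; ring
    rw [add_comm (s j), add_comm (t j), e3, e4]
    rw [e4] at e2
    have e1' := e1.ne'
    have e2' := e2.ne'
    have hρ' := hρ.ne'
    set p : ℝ := (1 - i * μ) + (1 - j * μ) with hp
    have e5 : (1 - i * μ) / (ρ * p) + μ * i / (ρ * (p + μ)) + ((1 - j * μ) / (ρ * p) + μ * j / (ρ * (p + μ)))
        = p / (ρ * p) + (2 - p) / (ρ * (p + μ)) := by
      rw [hp]; ring
    rw [e5]
    field_simp
    ring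
  refine ⟨X, -(1 / 2 : ℝ) • Bᵀ, hXP, ?_, ?_⟩
  · have e : A * X + X * Aᵀ + ρ • (G * X + X * Gᵀ) = B * Bᵀ := by
      rw [← hSX']
      simp only [Matrix.transpose_add, Matrix.transpose_smul, add_mul, mul_add, Matrix.smul_mul, Matrix.mul_smul]
      module
    have e2 : A * X + X * Aᵀ + B * (-(1 / 2 : ℝ) • Bᵀ) + (-(1 / 2 : ℝ) • Bᵀ)ᵀ * Bᵀ + ρ • (G * X + X * Gᵀ)
      = (A * X + X * Aᵀ + ρ • (G * X + X * Gᵀ)) - B * Bᵀ := by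
      simp only [Matrix.transpose_smul, Matrix.transpose_transpose, Matrix.smul_mul, Matrix.mul_smul]
      module
    rw [e2, e, sub_self]
  · rw [hGX']
    exact hTP.smul (by positivity)

theorem aux_G_pow {n : ℕ} (A G : Matrix (Fin n) (Fin n) ℝ) (μ : ℝ)
    (h : A * G = (G + μ • 1) * A) (i : ℕ) : G * A ^ i = A ^ i * G - (i * μ) • A ^ i := by
  have h' : G * A = A * G - μ • A := by
    rw [h, add_mul, Matrix.smul_mul, one_mul]; abel
  induction i with
  | zero => simp
  | succ i ih =>
    rw [pow_succ, ← mul_assoc, ih, sub_mul, mul_assoc, h', mul_sub, Matrix.smul_mul, Matrix.mul_smul,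
      ← mul_assoc]
    push_cast
    module

theorem aux_nilp {n m : ℕ} (A G : Matrix (Fin n) (Fin n) ℝ) (B : Matrix (Fin n) (Fin m) ℝ) (N : ℕ)
    (hr : (ctrbM A B N).rank = n) (μ : ℝ) (hμ0 : μ ≠ 0)
    (hGi : ∀ i : ℕ, G * (A ^ i * B) = (1 - i * μ) • (A ^ i * B)) : A ^ N = 0 := by
  set p : Polynomial ℝ := ∏ i ∈ Finset.range N, (Polynomial.X - Polynomial.C (1 - i * μ)) with hp
  have hq : ∀ (q : Polynomial ℝ) (i : ℕ),
      Polynomial.aeval G q * (A ^ i * B) = (q.eval (1 - i * μ)) • (A ^ i * B) := by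
    intro q i
    induction q using Polynomial.induction_on' with
    | add p q hp hq => rw [map_add, Matrix.add_mul, hp, hq, Polynomial.eval_add, add_smul]
    | monomial k a =>
      rw [Polynomial.aeval_monomial, Polynomial.eval_monomial]
      have hk : G ^ k * (A ^ i * B) = ((1 - i * μ) ^ k) • (A ^ i * B) := by
        induction k with
        | zero => simp
        | succ k ih =>
          rw [pow_succ, Matrix.mul_assoc, hGi, Matrix.mul_smul, ih, smul_smul, pow_succ, mul_comm]
      rw [Matrix.mul_assoc, hk, Algebra.algebraMap_eq_smul_one, Matrix.smul_mul, Matrix.one_mul, smul_smul]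
  have hp0 : Polynomial.aeval G p = 0 := by
    apply aux_ctrb_mat A B N hr
    intro i hi
    rw [hq, hp, Polynomial.eval_prod, Finset.prod_eq_zero (Finset.mem_range.mpr hi) (by simp), zero_smul]
  have hAB : A ^ N * B = 0 := by
    have h1 := hq p N
    rw [hp0, Matrix.zero_mul] at h1
    refine (smul_eq_zero.mp h1.symm).resolve_left ?_
    rw [hp, Polynomial.eval_prod]
    refine Finset.prod_ne_zero_iff.mpr fun i hi => ?_
    have hi' : (i : ℝ) < N := by exact_mod_cast Finset.mem_range.mp hi
    simp only [Polynomial.eval_sub, Polynomial.eval_X, Polynomial.eval_C]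
    have : (1 - (N : ℝ) * μ - (1 - i * μ)) = (i - N) * μ := by ring
    rw [this]
    exact mul_ne_zero (by linarith) hμ0
  apply aux_ctrb_mat A B N hr
  intro i _
  rw [← Matrix.mul_assoc, ← pow_add, add_comm, pow_add, Matrix.mul_assoc, hAB, Matrix.mul_zero]

theorem aux_exp {n : ℕ} (A : Matrix (Fin n) (Fin n) ℝ) (N : ℕ) (h : A ^ N = 0) (c : ℝ) :
    (∑ i ∈ Finset.range N, (c ^ i / (i.factorial : ℝ)) • A ^ i) *
    (∑ i ∈ Finset.range N, ((-c) ^ i / (i.factorial : ℝ)) • A ^ i) = 1 := by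
  have hc : ∀ c : ℝ, (c • A) ^ N = 0 := fun c => by rw [smul_pow, h, smul_zero]
  have he : ∀ c : ℝ, IsNilpotent.exp (c • A) = ∑ i ∈ Finset.range N, (c ^ i / (i.factorial : ℝ)) • A ^ i := by
    intro c
    rw [IsNilpotent.exp_eq_sum (hc c)]
    refine Finset.sum_congr rfl fun i _ => ?_
    rw [smul_pow, ← Rat.cast_smul_eq_qsmul ℝ, smul_smul]
    congr 1
    push_cast
    ring
  rw [← he, ← he, neg_smul]
  exact IsNilpotent.exp_mul_exp_neg_self ⟨N, hc c⟩

theorem aux_case_ne {n m : ℕ} (A G : Matrix (Fin n) (Fin n) ℝ) (B : Matrix (Fin n) (Fin m) ℝ)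
    (N : ℕ) (μ ρ : ℝ) (hρ : 0 < ρ) (hμ0 : μ ≠ 0) (hμ2 : 0 < 2 + μ)
    (hr : (ctrbM A B N).rank = n) (h : A * G = (G + μ • 1) * A)  (hGB : G * B = B)
    (h1 : ∀ i < N, 0 < 1 - i * μ) (h2 : ∀ i < N, 0 < 1 + μ / 2 - i * μ) :
    ∃ (X : Matrix (Fin n) (Fin n) ℝ) (Y : Matrix (Fin m) (Fin n) ℝ),
        X.PosDef ∧
        A * X + X * Aᵀ + B * Y + Yᵀ * Bᵀ + ρ • (G * X + X * Gᵀ) = 0 ∧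
        (G * X + X * Gᵀ).PosDef := by
  have hGp := aux_G_pow A G μ h
  have hGi : ∀ i : ℕ, G * (A ^ i * B) = (1 - i * μ) • (A ^ i * B) := by
    intro i
    rw [← Matrix.mul_assoc, hGp, Matrix.sub_mul, Matrix.mul_assoc, hGB, Matrix.smul_mul]
    module
  have hAN := aux_nilp A G B N hr μ hμ0 hGi
  set κ : ℝ := -(1 / (ρ * μ)) with hκ
  have hκ0 : κ ≠ 0 := by
    rw [hκ]; have := hρ.ne'; simp [this, hμ0]
  set E : Matrix (Fin n) (Fin n) ℝ := ∑ i ∈ Finset.range N, ((-κ) ^ i / (i.factorial : ℝ)) • A ^ i with hE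
  have hEE := aux_exp A N hAN κ
  rw [← hE] at hEE
  set W := E * B with hW
  have hVA : ∀ i : ℕ, A * ((κ ^ i / (i.factorial : ℝ)) • (A ^ i * W)) =
      (-(ρ * μ * (i + 1))) • ((κ ^ (i + 1) / ((i + 1).factorial : ℝ)) • (A ^ (i + 1) * W)) := by
    intro i
    rw [Matrix.mul_smul, ← Matrix.mul_assoc, ← pow_succ', smul_smul]
    congr 1
    rw [Nat.factorial_succ, pow_succ]
    push_cast
    have e : κ * (ρ * μ) = -1 := by rw [hκ]; have := hρ.ne'; field_simp
    clear_value κ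
    have e2 : (i.factorial : ℝ) ≠ 0 := by exact_mod_cast i.factorial_ne_zero
    have e3 : (i : ℝ) + 1 ≠ 0 := by positivity
    field_simp
    linear_combination e
  have hGW : G * W = W + (μ * κ) • (A * W) := by
    have e1 : W = ∑ i ∈ Finset.range N, ((-κ) ^ i / (i.factorial : ℝ)) • (A ^ i * B) := by
      rw [hW, hE, Matrix.sum_mul]
      simp only [Matrix.smul_mul]
    have e2 : κ • (A * W) = - ∑ i ∈ Finset.range N, (i * ((-κ) ^ i / (i.factorial : ℝ))) • (A ^ i * B) := by
      rw [← aux_shift (fun i : ℕ => (i * ((-κ) ^ i / (i.factorial : ℝ))) • (A ^ i * B)) N (by simp) (by simp [hAN]),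
        e1, Matrix.mul_sum, Finset.smul_sum, ← Finset.sum_neg_distrib]
      refine Finset.sum_congr rfl fun i _ => ?_
      rw [Matrix.mul_smul, ← Matrix.mul_assoc, ← pow_succ', smul_smul, ← neg_smul]
      congr 1
      rw [Nat.factorial_succ, pow_succ]
      push_cast
      have e2 : (i.factorial : ℝ) ≠ 0 := by exact_mod_cast i.factorial_ne_zero
      have e3 : (i : ℝ) + 1 ≠ 0 := by positivity
      field_simp
    rw [← smul_smul, e2, e1, Matrix.mul_sum, ← Finset.sum_neg_distrib, Finset.smul_sum, ← Finset.sum_add_distrib]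
    refine Finset.sum_congr rfl fun i _ => ?_
    rw [Matrix.mul_smul, hGi]
    module
  refine aux_core A G B (fun i => (κ ^ i / (i.factorial : ℝ)) • (A ^ i * W)) N μ ρ hρ hμ0 hμ2
    hVA ?_ (by simp [hAN]) ?_ ?_ h1 h2
  · intro i
    have e : (μ * (i + 1)) • ((κ ^ (i + 1) / ((i + 1).factorial : ℝ)) • (A ^ (i + 1) * W))
       = (κ ^ i / (i.factorial : ℝ)) • ((μ * κ) • (A ^ (i + 1) * W)) := by
      rw [smul_smul, smul_smul]
      congr 1
      rw [Nat.factorial_succ, pow_succ]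
      push_cast
      have e2 : (i.factorial : ℝ) ≠ 0 := by exact_mod_cast i.factorial_ne_zero
      have e3 : (i : ℝ) + 1 ≠ 0 := by positivity
      field_simp
    rw [e, Matrix.mul_smul, ← Matrix.mul_assoc, hGp, Matrix.sub_mul, Matrix.mul_assoc, hGW, Matrix.mul_add,
      Matrix.mul_smul, ← Matrix.mul_assoc (A ^ i) A, ← pow_succ, Matrix.smul_mul]
    module
  · simp only [← Matrix.smul_mul]
    rw [← Matrix.sum_mul, hW, ← Matrix.mul_assoc, hEE, Matrix.one_mul]
  · intro x hx
    have hx' : ∀ i : ℕ, x ᵥ* (A ^ i * W) = 0 := by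
      intro i
      by_cases hi : i < N
      · have h3 := hx i hi
        rw [Matrix.vecMul_smul] at h3
        refine (smul_eq_zero.mp h3).resolve_left ?_
        have e2 : (i.factorial : ℝ) ≠ 0 := by exact_mod_cast i.factorial_ne_zero
        positivity
      · have : A ^ i = 0 := pow_eq_zero_of_le (not_lt.mp hi) hAN
        simp [this]
    apply aux_ctrb_inj A B N hr
    intro i _
    have e : A ^ i * B = ∑ k ∈ Finset.range N, (κ ^ k / (k.factorial : ℝ)) • (A ^ (i + k) * W) := by
      have e1 : B = (∑ k ∈ Finset.range N, (κ ^ k / (k.factorial : ℝ)) • A ^ k) * W := by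
        rw [hW, ← Matrix.mul_assoc, hEE, Matrix.one_mul]
      conv_lhs => rw [e1]
      rw [Matrix.sum_mul, Matrix.mul_sum]
      refine Finset.sum_congr rfl fun k _ => ?_
      rw [Matrix.smul_mul, Matrix.mul_smul, ← Matrix.mul_assoc, pow_add]
    rw [e, Matrix.vecMul_sum]
    refine Finset.sum_eq_zero fun k _ => ?_
    rw [Matrix.vecMul_smul, hx', smul_zero]

theorem aux_nodes {n : ℕ} (H : Matrix (Fin n) (Fin n) ℝ) :
    ∃ s : ℕ → ℝ, Function.Injective s ∧ (∀ k, 0 < s k) ∧ ∀ k, IsUnit (s k • 1 + H).det := by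
  have hfin : {r : ℝ | (-H).charpoly.IsRoot r}.Finite :=
    Polynomial.finite_setOfPred_isRoot (Matrix.charpoly_monic _).ne_zero
  have hinf : (Set.Ioi (0 : ℝ) \ {r : ℝ | (-H).charpoly.IsRoot r}).Infinite :=
    (Set.Ioi_infinite 0).sdiff hfin
  let f := hinf.natEmbedding
  refine ⟨fun k => (f k : ℝ), fun a b hab => f.injective (Subtype.ext hab), fun k => (f k).2.1, fun k => ?_⟩
  have h : ¬ (-H).charpoly.IsRoot (f k : ℝ) := (f k).2.2
  rw [isUnit_iff_ne_zero]
  intro h0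
  apply h
  rw [Polynomial.IsRoot, Matrix.eval_charpoly, sub_neg_eq_add]
  refine Eq.trans ?_ h0
  congr 2
  simp [Matrix.smul_one_eq_diagonal]

theorem aux_case_zero {n m : ℕ} (F : Matrix (Fin n) (Fin n) ℝ) (B : Matrix (Fin n) (Fin m) ℝ)
    (hF : ∀ x : Fin n → ℝ, (∀ i < n, x ᵥ* (F ^ i * B) = 0) → x = 0) :
    ∃ (X : Matrix (Fin n) (Fin n) ℝ) (Y : Matrix (Fin m) (Fin n) ℝ),
        X.PosDef ∧ F * X + X * Fᵀ + B * Y + Yᵀ * Bᵀ = 0 := by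
  obtain ⟨s, hinj, hpos, hU⟩ := aux_nodes (F ^ 2)
  set R : ℕ → Matrix (Fin n) (Fin n) ℝ := fun k => (s k • 1 + F ^ 2)⁻¹ with hR
  have hR1 : ∀ k, (s k • 1 + F ^ 2) * R k = 1 := fun k => Matrix.mul_nonsing_inv _ (hU k)
  set P : ℕ → Matrix (Fin n) (Fin m) ℝ := fun k => R k * B with hP
  have hFP : ∀ k, F * (F * P k) = B - s k • P k := by
    intro k
    have h : (s k • 1 + F ^ 2) * P k = B := by
      rw [hP]; simp only []; rw [← Matrix.mul_assoc, hR1, Matrix.one_mul]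
    rw [← h, Matrix.add_mul, Matrix.smul_mul, Matrix.one_mul, add_sub_cancel_left, sq, Matrix.mul_assoc]
  refine ⟨∑ k ∈ Finset.range n, ((F * P k) * (F * P k)ᵀ + s k • (P k * (P k)ᵀ)),
    -∑ k ∈ Finset.range n, (F * P k)ᵀ, ?_, ?_⟩
  · refine Matrix.PosDef.of_dotProduct_mulVec_pos ?_ ?_
    · rw [Matrix.IsHermitian, Matrix.conjTranspose_eq_transpose_of_trivial]
      simp only [Matrix.transpose_sum, Matrix.transpose_add, Matrix.transpose_smul, Matrix.transpose_mul,
        Matrix.transpose_transpose]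
    · intro x hx
      simp only [star_trivial, Matrix.sum_mulVec, dotProduct_sum, Matrix.add_mulVec, dotProduct_add,
        Matrix.smul_mulVec, dotProduct_smul, aux_quad, smul_eq_mul]
      have hn1 : ∀ v : Fin m → ℝ, 0 ≤ ∑ r, v r * v r :=
        fun v => Finset.sum_nonneg fun r _ => mul_self_nonneg _
      have hn2 : ∀ v : Fin m → ℝ, ∑ r, v r * v r = 0 → v = 0 := by
        intro v hv
        exact dotProduct_self_eq_zero.mp hv
      have hnn : ∀ k ∈ Finset.range n, 0 ≤ ∑ r, (x ᵥ* (F * P k)) r * (x ᵥ* (F * P k)) r +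
          s k * ∑ r, (x ᵥ* P k) r * (x ᵥ* P k) r := fun k _ =>
        add_nonneg (hn1 _) (mul_nonneg (hpos k).le (hn1 _))
      refine lt_of_le_of_ne (Finset.sum_nonneg hnn) fun h0 => hx ?_
      have h1 := (Finset.sum_eq_zero_iff_of_nonneg hnn).mp h0.symm
      have h2 : ∀ k < n, x ᵥ* (F * P k) = 0 ∧ x ᵥ* P k = 0 := by
        intro k hk
        have h3 := h1 k (by simpa using hk)
        have h4 := hn1 (x ᵥ* (F * P k))
        have h5 := mul_nonneg (hpos k).le (hn1 (x ᵥ* P k))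
        refine ⟨hn2 _ (by linarith), hn2 _ ?_⟩
        have h6 : s k * ∑ r, (x ᵥ* P k) r * (x ᵥ* P k) r = 0 := by linarith
        exact (mul_eq_zero.mp h6).resolve_left (hpos k).ne'
      -- nodal polynomial
      set v : ℕ → ℝ := fun k => - s k with hv
      set Q := Polynomial.aeval (F ^ 2) (Lagrange.nodal (Finset.range n) v) with hQ
      have hfac : ∀ k, Polynomial.aeval (F ^ 2) (Polynomial.X - Polynomial.C (v k)) = s k • 1 + F ^ 2 := by
        intro k
        simp [hv, Algebra.algebraMap_eq_smul_one, add_comm]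
      have hQu : IsUnit Q := by
        have : ∀ T : Finset ℕ, IsUnit (Polynomial.aeval (F ^ 2) (Lagrange.nodal T v)) := by
          intro T
          induction T using Finset.induction_on with
          | empty => simp
          | insert k T hk ih =>
            rw [Lagrange.nodal_insert_eq_nodal hk, map_mul, hfac]
            exact ((Matrix.isUnit_iff_isUnit_det _).mpr (hU k)).mul ih
        exact this _
      obtain ⟨w, hw⟩ : ∃ w : Fin n → ℝ, w ᵥ* Q = x := by
        refine ⟨x ᵥ* Q⁻¹, ?_⟩
        rw [Matrix.vecMul_vecMul, Matrix.nonsing_inv_mul _ ((Matrix.isUnit_iff_isUnit_det _).mp hQu),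
          Matrix.vecMul_one]
      have hcomm : ∀ q : Polynomial ℝ, Commute F (Polynomial.aeval (F ^ 2) q) := by
        intro q
        have : Polynomial.aeval (F ^ 2) q = Polynomial.aeval F (q.comp (Polynomial.X ^ 2)) := by
          rw [Polynomial.aeval_comp]; simp
        rw [this]
        have h7 := Polynomial.aeval_X (R := ℝ) F
        conv_lhs => rw [← h7]
        rw [Commute, SemiconjBy, ← map_mul, ← map_mul, mul_comm]
      have hN0 : ∀ k < n, ∀ L : Matrix (Fin n) (Fin n) ℝ, Commute L Q → x ᵥ* (L * P k) = 0 →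
          w ᵥ* (L * Polynomial.aeval (F ^ 2) (Lagrange.nodal ((Finset.range n).erase k) v) * B) = 0 := by
        intro k hk L hL hLx
        rw [← hw, Matrix.vecMul_vecMul] at hLx
        rw [← hLx]
        congr 1
        have e : Q * R k = Polynomial.aeval (F ^ 2) (Lagrange.nodal ((Finset.range n).erase k) v) := by
          rw [hQ, Lagrange.nodal_eq_mul_nodal_erase (Finset.mem_range.mpr hk), mul_comm, map_mul, hfac,
            mul_assoc, hR1, mul_one]
        rw [← Matrix.mul_assoc, ← hL.eq, hP, Matrix.mul_assoc L Q, ← Matrix.mul_assoc Q, e, Matrix.mul_assoc]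
      have hpoly : ∀ L : Matrix (Fin n) (Fin n) ℝ, Commute L Q → (∀ k < n, x ᵥ* (L * P k) = 0) →
          ∀ q : Polynomial ℝ, q.degree < n → w ᵥ* (L * Polynomial.aeval (F ^ 2) q * B) = 0 := by
        intro L hL hLx q hq
        have hvi : Set.InjOn v (Finset.range n) := fun a _ b _ hab => hinj (neg_injective hab)
        have e := Lagrange.eq_interpolate (s := Finset.range n) (v := v) (f := q) hvi (by simpa using hq)
        rw [e, Lagrange.interpolate_apply, map_sum, Matrix.mul_sum, Matrix.sum_mul, Matrix.vecMul_sum]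
        refine Finset.sum_eq_zero fun k hk => ?_
        have eb : Lagrange.basis (Finset.range n) v k =
            Polynomial.C (∏ j ∈ (Finset.range n).erase k, (v k - v j)⁻¹)
              * Lagrange.nodal ((Finset.range n).erase k) v := by
          simp only [Lagrange.basis, Lagrange.basisDivisor, Lagrange.nodal, Finset.prod_mul_distrib, map_prod]
        rw [eb, ← mul_assoc, ← Polynomial.C_mul, Polynomial.C_mul', map_smul, Matrix.mul_smul, Matrix.smul_mul,
          Matrix.vecMul_smul, hN0 k (by simpa using hk) L hL (hLx k (by simpa using hk)), smul_zero]
      have hw0 : w = 0 := by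
        apply hF
        intro i hi
        have hd : ∀ j < n, (Polynomial.X ^ j : Polynomial ℝ).degree < n := by
          intro j hj
          rw [Polynomial.degree_X_pow]; exact_mod_cast hj
        rcases Nat.even_or_odd' i with ⟨j, rfl | rfl⟩
        · have := hpoly 1 (Commute.one_left _) (fun k hk => by rw [Matrix.one_mul]; exact (h2 k hk).2)
            (Polynomial.X ^ j) (hd j (by omega))
          simpa [← pow_mul] using this
        · have := hpoly F (hcomm _) (fun k hk => (h2 k hk).1)
            (Polynomial.X ^ j) (hd j (by omega))
          simpa [← pow_mul, ← pow_succ'] using this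
      rw [← hw, hw0, Matrix.zero_vecMul]
  · have hsum : ∀ k, F * ((F * P k) * (F * P k)ᵀ + s k • (P k * (P k)ᵀ)) +
        ((F * P k) * (F * P k)ᵀ + s k • (P k * (P k)ᵀ)) * Fᵀ = B * (F * P k)ᵀ + (F * P k) * Bᵀ := by
      intro k
      have e1 : F * ((F * P k) * (F * P k)ᵀ + s k • (P k * (P k)ᵀ))
          = (F * (F * P k)) * (F * P k)ᵀ + s k • ((F * P k) * (P k)ᵀ) := by
        simp only [Matrix.mul_add, Matrix.mul_smul, Matrix.mul_assoc]
      have e2 : ((F * P k) * (F * P k)ᵀ + s k • (P k * (P k)ᵀ)) * Fᵀ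
          = (F * P k) * (F * (F * P k))ᵀ + s k • (P k * (F * P k)ᵀ) := by
        simp only [Matrix.add_mul, Matrix.smul_mul, Matrix.mul_assoc, Matrix.transpose_mul]
      rw [e1, e2, hFP, Matrix.transpose_sub, Matrix.transpose_smul, Matrix.sub_mul, Matrix.mul_sub,
        Matrix.smul_mul, Matrix.mul_smul]
      abel
    rw [Matrix.mul_sum, Matrix.sum_mul, ← Finset.sum_add_distrib, Finset.sum_congr rfl fun k _ => hsum k,
      Finset.sum_add_distrib, Matrix.mul_neg, Matrix.transpose_neg, Matrix.neg_mul, Matrix.transpose_sum,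
      Matrix.mul_sum, Matrix.sum_mul]
    simp only [Matrix.transpose_transpose]
    abel

/-- Solvability of the linear algebraic system (LMI) for any ρ > 0. -/
theorem design_LMI_solvable
    {n m : ℕ}
    (A₀ : Matrix (Fin n) (Fin n) ℝ) (B : Matrix (Fin n) (Fin m) ℝ)
    (hctrb : (ctrbM A₀ B n).rank = n)
    (ntilde : ℕ) (hntilde : (ctrbM A₀ B ntilde).rank = n) (hntildemin : ∀ k < ntilde, (ctrbM A₀ B k).rank ≠ n)
    (μ : ℝ) (hμ : μ ∈ Set.Icc (-1 : ℝ) (1 / (ntilde : ℝ)))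
    (Gd : Matrix (Fin n) (Fin n) ℝ) (hGdAH : AntiHurwitz Gd)
    (hA₀G : A₀ * Gd = (Gd + μ • 1) * A₀) (hGB : Gd * B = B) :
    ∀ ρ : ℝ, 0 < ρ →
      ∃ (X : Matrix (Fin n) (Fin n) ℝ) (Y : Matrix (Fin m) (Fin n) ℝ),
        X.PosDef ∧
        A₀ * X + X * A₀ᵀ + B * Y + Yᵀ * Bᵀ + ρ • (Gd * X + X * Gdᵀ) = 0 ∧
        (Gd * X + X * Gdᵀ).PosDef := by
  intro ρ hρ
  by_cases hμ0 : μ = 0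
  · subst hμ0
    have hcomm : A₀ * Gd = Gd * A₀ := by simpa using hA₀G
    have hG1 : Gd = 1 := by
      rw [← sub_eq_zero]
      apply aux_ctrb_mat A₀ B n hctrb
      intro i _
      have hp : Gd * A₀ ^ i = A₀ ^ i * Gd := ((show Commute Gd A₀ from hcomm.symm).pow_right i).eq
      rw [Matrix.sub_mul, Matrix.one_mul, ← Matrix.mul_assoc, hp, Matrix.mul_assoc, hGB, sub_self]
    obtain ⟨X, Y, hX, hE⟩ := aux_case_zero (A₀ + ρ • 1) B (by
      intro x hx
      apply aux_ctrb_inj A₀ B n hctrb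
      have key : ∀ k j : ℕ, k + j < n → x ᵥ* (A₀ ^ k * ((A₀ + ρ • 1) ^ j * B)) = 0 := by
        intro k
        induction k with
        | zero => intro j hj; rw [pow_zero, Matrix.one_mul]; exact hx j (by omega)
        | succ k ih =>
          intro j hj
          have e : A₀ ^ (k + 1) * ((A₀ + ρ • 1) ^ j * B) =
              A₀ ^ k * ((A₀ + ρ • 1) ^ (j + 1) * B) - ρ • (A₀ ^ k * ((A₀ + ρ • 1) ^ j * B)) := by
            rw [pow_succ' (A₀ + ρ • 1) j, Matrix.mul_assoc (A₀ + ρ • 1), Matrix.add_mul, Matrix.smul_mul,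
              Matrix.one_mul, Matrix.mul_add, Matrix.mul_smul, add_sub_cancel_right, pow_succ, Matrix.mul_assoc]
          rw [e, Matrix.vecMul_sub, Matrix.vecMul_smul, ih _ (by omega), ih _ (by omega)]
          simp
      intro i hi
      simpa using key i 0 (by omega))
    refine ⟨X, Y, hX, ?_, ?_⟩
    · rw [← hE, hG1]
      simp only [Matrix.add_mul, Matrix.mul_add, Matrix.transpose_add, Matrix.transpose_smul, Matrix.transpose_one,
        Matrix.smul_mul, Matrix.mul_smul, Matrix.one_mul, Matrix.mul_one]
      module
    · rw [hG1, Matrix.transpose_one, Matrix.one_mul, Matrix.mul_one]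
      exact hX.add hX
  · obtain ⟨hl, hu⟩ := hμ
    have h1 : ∀ i < ntilde, 0 < 1 - (i : ℝ) * μ := by
      intro i hi
      have hi' : (i : ℝ) < ntilde := by exact_mod_cast hi
      have hi0 : (0 : ℝ) ≤ i := by positivity
      have hN : (0 : ℝ) < ntilde := by linarith
      rw [le_div_iff₀ hN] at hu
      by_cases hm : 0 < μ
      · nlinarith
      · nlinarith
    refine aux_case_ne A₀ Gd B ntilde μ ρ hρ hμ0 (by linarith) hntilde hA₀G hGB h1 ?_
    intro i hi
    have := h1 i hi
    by_cases hm : 0 < μ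
    · linarith
    · have hi0 : (0 : ℝ) ≤ i := by positivity
      nlinarith
end
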